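/- Let $S$, $U$, $X$, $Y$, $\hat{S}$ be random variables on a common probability space, each taking values in a finite set, whose joint distribution factorizes as $P_S P_U P_{X|S,U} P_{Y|X} P_{\hat{S}|Y,U}$; equivalently: (i) $U$ is independent of $S$; (ii) $Y$ is conditionally independent of $(S,U)$ given $X$; (iii) $\hat{S}$ is conditionally independent of $(S,X)$ given $(Y,U)$. Then $I(S;\hat{S}) \le I(X;Y)$. -/

import Mathlib

open MeasureTheory

/-- `pr μ E` is the probability of the event `E` as a real number. -/
noncomputable def pr {Ω : Type*} [MeasurableSpace Ω] (μ : Measure Ω) (E : Set Ω) : ℝ :=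
  (μ E).toReal

/-- Mutual information `I(X;Y)` of two finitely-valued random variables,
with the convention `0 log 0 = 0` (note `Real.log 0 = 0` in Mathlib). -/
noncomputable def mutInfo {Ω α β : Type*} [MeasurableSpace Ω] [Fintype α] [Fintype β]
    (μ : Measure Ω) (X : Ω → α) (Y : Ω → β) : ℝ :=
  ∑ x : α, ∑ y : β,
    pr μ {ω | X ω = x ∧ Y ω = y} *
      Real.log (pr μ {ω | X ω = x ∧ Y ω = y} /
        (pr μ {ω | X ω = x} * pr μ {ω | Y ω = y}))

/-- `X` and `Y` are independent: the joint pmf factorizes. -/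
def IndepRV {Ω α β : Type*} [MeasurableSpace Ω] (μ : Measure Ω)
    (X : Ω → α) (Y : Ω → β) : Prop :=
  ∀ x y, pr μ {ω | X ω = x ∧ Y ω = y} = pr μ {ω | X ω = x} * pr μ {ω | Y ω = y}

/-- `A` and `B` are conditionally independent given `C`:
`P(A = a, B = b ∣ C = c) = P(A = a ∣ C = c) * P(B = b ∣ C = c)` whenever `P(C = c) > 0`. -/
def CondIndepRV {Ω α β γ : Type*} [MeasurableSpace Ω] (μ : Measure Ω)
    (A : Ω → α) (B : Ω → β) (C : Ω → γ) : Prop :=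
  ∀ a b c, 0 < pr μ {ω | C ω = c} →
    pr μ {ω | A ω = a ∧ B ω = b ∧ C ω = c} / pr μ {ω | C ω = c} =
      (pr μ {ω | A ω = a ∧ C ω = c} / pr μ {ω | C ω = c}) *
      (pr μ {ω | B ω = b ∧ C ω = c} / pr μ {ω | C ω = c})

/-!
Mutual information cannot increase along a Markov chain: `I(A;B) ≤ I(A;C)` when `A` and `B` are
conditionally independent given `C`, because the chain rule expands `I(A;B,C)` both as
`I(A;C) + I(A;B|C) = I(A;C)` and as `I(A;B) + I(A;C|B)`. Hence `I(S;Ŝ) ≤ I(S;Y,U)`. The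
independence of `S` and `U` makes the common randomness worthless on its own, so that
`I(S;Y,U) = I(S;Y|U) ≤ I(S,U;Y)`, and the Markov chain from `(S,U)` through `X` to `Y` bounds this
by `I(X;Y)`.
-/

section Probability

variable {Ω α : Type*} [MeasurableSpace Ω] {μ : Measure Ω}

lemma pr_nonneg (E : Set Ω) : 0 ≤ pr μ E :=
  ENNReal.toReal_nonneg

lemma pr_univ [IsProbabilityMeasure μ] : pr μ Set.univ = 1 :=
  probReal_univ

lemma pr_eq_zero_of_imp [IsFiniteMeasure μ] {p q : Ω → Prop} (hpq : ∀ ω, p ω → q ω)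
    (hq : pr μ {ω | q ω} = 0) : pr μ {ω | p ω} = 0 :=
  measureReal_mono_null hpq hq

lemma sum_pr_eq_and [IsFiniteMeasure μ] [Fintype α] [MeasurableSpace α]
    [MeasurableSingletonClass α] {X : Ω → α} (hX : Measurable X) (p : Ω → Prop) :
    ∑ x, pr μ {ω | X ω = x ∧ p ω} = pr μ {ω | p ω} := by
  have hfiber (x : α) : MeasurableSet (X ⁻¹' {x}) := hX (measurableSet_singleton x)
  calc ∑ x, pr μ {ω | X ω = x ∧ p ω}
      = ∑ x, (μ.restrict {ω | p ω}).real (X ⁻¹' {x}) :=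
        Finset.sum_congr rfl fun x _ => (measureReal_restrict_apply (hfiber x)).symm
    _ = (μ.restrict {ω | p ω}).real (X ⁻¹' (Finset.univ : Finset α)) :=
        sum_measureReal_preimage_singleton _ fun x _ => hfiber x
    _ = pr μ {ω | p ω} := by simp [pr, Measure.real]

lemma sum_pr_eq [IsProbabilityMeasure μ] [Fintype α] [MeasurableSpace α]
    [MeasurableSingletonClass α] {X : Ω → α} (hX : Measurable X) :
    ∑ x, pr μ {ω | X ω = x} = 1 := by
  simpa [pr_univ] using sum_pr_eq_and (μ := μ) hX fun _ => True

end Probability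

namespace CondIndepRV

variable {Ω α β β' γ : Type*} [MeasurableSpace Ω] {μ : Measure Ω}
  {A : Ω → α} {B : Ω → β} {B' : Ω → β'} {C : Ω → γ}

lemma symm (h : CondIndepRV μ A B C) : CondIndepRV μ B A C := fun b a c hc => by
  simpa only [and_left_comm, mul_comm] using h a b c hc

lemma of_prodMk_right [Finite β'] [MeasurableSpace β'] [MeasurableSingletonClass β']
    [IsFiniteMeasure μ] (hB' : Measurable B') (h : CondIndepRV μ A (fun ω => (B ω, B' ω)) C) :
    CondIndepRV μ A B C := fun a b c hc => by
  cases nonempty_fintype β'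
  have hsum := Finset.sum_congr rfl fun b' (_ : b' ∈ Finset.univ) => h a (b, b') c hc
  have hABC : ∑ b', pr μ {ω | A ω = a ∧ (B ω, B' ω) = (b, b') ∧ C ω = c} =
      pr μ {ω | A ω = a ∧ B ω = b ∧ C ω = c} := by
    rw [← sum_pr_eq_and hB']
    simp only [Prod.mk.injEq, and_assoc, and_left_comm]
  have hBC : ∑ b', pr μ {ω | (B ω, B' ω) = (b, b') ∧ C ω = c} =
      pr μ {ω | B ω = b ∧ C ω = c} := by
    rw [← sum_pr_eq_and hB']
    simp only [Prod.mk.injEq, and_assoc, and_left_comm]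
  rwa [← Finset.sum_div, ← Finset.mul_sum, ← Finset.sum_div, hABC, hBC] at hsum

lemma pr_mul_pr [IsFiniteMeasure μ] (h : CondIndepRV μ A B C) (a : α) (b : β) (c : γ) :
    pr μ {ω | A ω = a ∧ B ω = b ∧ C ω = c} * pr μ {ω | C ω = c} =
      pr μ {ω | A ω = a ∧ C ω = c} * pr μ {ω | B ω = b ∧ C ω = c} := by
  obtain hc | hc := (pr_nonneg (μ := μ) {ω | C ω = c}).eq_or_lt'
  · rw [hc, pr_eq_zero_of_imp (fun ω (hω : A ω = a ∧ C ω = c) => hω.2) hc, mul_zero, zero_mul]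
  · have habc := h a b c hc
    field_simp at habc
    exact habc

end CondIndepRV

lemma sub_le_mul_log_div {p q : ℝ} (hp : 0 ≤ p) (hq : 0 ≤ q) (hpq : q = 0 → p = 0) :
    p - q ≤ p * Real.log (p / q) := by
  obtain rfl | hp := hp.eq_or_lt
  · simpa using hq
  have hq : 0 < q := hq.lt_of_ne fun h => hp.ne' (hpq h.symm)
  calc p - q = p * (1 - (p / q)⁻¹) := by field_simp
    _ ≤ p * Real.log (p / q) := by
      gcongr
      exact Real.one_sub_inv_le_log_of_pos (by positivity)

section MutualInformation

variable {Ω α β γ : Type*} [MeasurableSpace Ω] {μ : Measure Ω}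
  {X : Ω → α} {Y : Ω → β} {Z : Ω → γ}

lemma mutInfo_comm [Fintype α] [Fintype β] : mutInfo μ X Y = mutInfo μ Y X := by
  unfold mutInfo
  rw [Finset.sum_comm]
  simp only [and_comm, mul_comm]

lemma mutInfo_prodMk_comm [Fintype α] [Fintype β] [Fintype γ] :
    mutInfo μ X (fun ω => (Y ω, Z ω)) = mutInfo μ X (fun ω => (Z ω, Y ω)) := by
  simp only [mutInfo, Fintype.sum_prod_type, Prod.mk.injEq]
  refine Finset.sum_congr rfl fun x _ => ?_
  rw [Finset.sum_comm]
  simp only [and_comm]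

lemma IndepRV.mutInfo_eq_zero [Fintype α] [Fintype β] (h : IndepRV μ X Y) :
    mutInfo μ X Y = 0 :=
  Finset.sum_eq_zero fun x _ => Finset.sum_eq_zero fun y _ => by
    rw [h x y, Real.log_div_self, mul_zero]

lemma mutInfo_nonneg [IsProbabilityMeasure μ]
    [Fintype α] [MeasurableSpace α] [MeasurableSingletonClass α]
    [Fintype β] [MeasurableSpace β] [MeasurableSingletonClass β]
    (hX : Measurable X) (hY : Measurable Y) : 0 ≤ mutInfo μ X Y := by
  have hsum : ∑ x, ∑ y, (pr μ {ω | X ω = x ∧ Y ω = y} -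
      pr μ {ω | X ω = x} * pr μ {ω | Y ω = y}) = 0 := by
    simp only [Finset.sum_sub_distrib, ← Finset.mul_sum, sum_pr_eq hY, mul_one]
    rw [Finset.sum_comm]
    simp only [sum_pr_eq_and hX, sum_pr_eq hX, sum_pr_eq hY, sub_self]
  rw [← hsum, mutInfo]
  gcongr with x _ y _
  refine sub_le_mul_log_div (pr_nonneg _) (mul_nonneg (pr_nonneg _) (pr_nonneg _)) fun h => ?_
  obtain hx | hy := mul_eq_zero.mp h
  · exact pr_eq_zero_of_imp (fun _ => And.left) hx
  · exact pr_eq_zero_of_imp (fun _ => And.right) hy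

/-- The conditional mutual information `I(X;Y|Z)` of finitely-valued random variables, the
quantity by which `I(X;Y,Z)` exceeds `I(X;Z)`. The conditional probabilities given `Z = z` are
cleared from the logarithm, so each term with `P(X = x, Y = y, Z = z) = 0` vanishes. -/
noncomputable def condMutInfo [Fintype α] [Fintype β] [Fintype γ]
    (μ : Measure Ω) (X : Ω → α) (Y : Ω → β) (Z : Ω → γ) : ℝ :=
  ∑ z : γ, ∑ x : α, ∑ y : β,
    pr μ {ω | X ω = x ∧ Y ω = y ∧ Z ω = z} *
      Real.log (pr μ {ω | X ω = x ∧ Y ω = y ∧ Z ω = z} * pr μ {ω | Z ω = z} /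
        (pr μ {ω | X ω = x ∧ Z ω = z} * pr μ {ω | Y ω = y ∧ Z ω = z}))

lemma condMutInfo_comm [Fintype α] [Fintype β] [Fintype γ] :
    condMutInfo μ X Y Z = condMutInfo μ Y X Z := by
  unfold condMutInfo
  refine Finset.sum_congr rfl fun z _ => ?_
  rw [Finset.sum_comm]
  simp only [and_left_comm, mul_comm]

lemma CondIndepRV.condMutInfo_eq_zero [IsFiniteMeasure μ] [Fintype α] [Fintype β] [Fintype γ]
    (h : CondIndepRV μ X Y Z) : condMutInfo μ X Y Z = 0 :=
  Finset.sum_eq_zero fun z _ => Finset.sum_eq_zero fun x _ => Finset.sum_eq_zero fun y _ => by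
    rw [h.pr_mul_pr x y z, Real.log_div_self, mul_zero]

lemma condMutInfo_nonneg [IsFiniteMeasure μ]
    [Fintype α] [MeasurableSpace α] [MeasurableSingletonClass α]
    [Fintype β] [MeasurableSpace β] [MeasurableSingletonClass β] [Fintype γ]
    (hX : Measurable X) (hY : Measurable Y) : 0 ≤ condMutInfo μ X Y Z := by
  refine Finset.sum_nonneg fun z _ => ?_
  have hsum : ∑ x, ∑ y, (pr μ {ω | X ω = x ∧ Y ω = y ∧ Z ω = z} -
      pr μ {ω | X ω = x ∧ Z ω = z} * pr μ {ω | Y ω = y ∧ Z ω = z} / pr μ {ω | Z ω = z}) = 0 := by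
    simp only [Finset.sum_sub_distrib, ← Finset.sum_div, ← Finset.mul_sum, ← Finset.sum_mul]
    rw [Finset.sum_comm]
    simp only [sum_pr_eq_and hX, sum_pr_eq_and hY, mul_self_div_self, sub_self]
  rw [← hsum]
  gcongr with x _ y _
  rw [← div_div_eq_mul_div (pr μ {ω | X ω = x ∧ Y ω = y ∧ Z ω = z})]
  refine sub_le_mul_log_div (pr_nonneg _)
    (div_nonneg (mul_nonneg (pr_nonneg _) (pr_nonneg _)) (pr_nonneg _)) fun h => ?_
  obtain hxy | hz := div_eq_zero_iff.mp h
  · obtain hx | hy := mul_eq_zero.mp hxy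
    · exact pr_eq_zero_of_imp (fun _ hω => ⟨hω.1, hω.2.2⟩) hx
    · exact pr_eq_zero_of_imp (fun _ => And.right) hy
  · exact pr_eq_zero_of_imp (fun _ hω => hω.2.2) hz

lemma pr_mul_log_div_eq_add [IsFiniteMeasure μ] (x : α) (y : β) (z : γ) :
    pr μ {ω | X ω = x ∧ Y ω = y ∧ Z ω = z} *
        Real.log (pr μ {ω | X ω = x ∧ Y ω = y ∧ Z ω = z} /
          (pr μ {ω | X ω = x} * pr μ {ω | Y ω = y ∧ Z ω = z})) =
      pr μ {ω | X ω = x ∧ Y ω = y ∧ Z ω = z} *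
        Real.log (pr μ {ω | X ω = x ∧ Z ω = z} / (pr μ {ω | X ω = x} * pr μ {ω | Z ω = z})) +
      pr μ {ω | X ω = x ∧ Y ω = y ∧ Z ω = z} *
        Real.log (pr μ {ω | X ω = x ∧ Y ω = y ∧ Z ω = z} * pr μ {ω | Z ω = z} /
          (pr μ {ω | X ω = x ∧ Z ω = z} * pr μ {ω | Y ω = y ∧ Z ω = z})) := by
  by_cases hxyz : pr μ {ω | X ω = x ∧ Y ω = y ∧ Z ω = z} = 0
  · simp only [hxyz, zero_mul, add_zero]
  have hx : pr μ {ω | X ω = x} ≠ 0 := mt (pr_eq_zero_of_imp fun _ hω => hω.1) hxyz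
  have hz : pr μ {ω | Z ω = z} ≠ 0 := mt (pr_eq_zero_of_imp fun _ hω => hω.2.2) hxyz
  have hxz : pr μ {ω | X ω = x ∧ Z ω = z} ≠ 0 :=
    mt (pr_eq_zero_of_imp fun _ hω => ⟨hω.1, hω.2.2⟩) hxyz
  have hyz : pr μ {ω | Y ω = y ∧ Z ω = z} ≠ 0 := mt (pr_eq_zero_of_imp fun _ hω => hω.2) hxyz
  rw [← mul_add, ← Real.log_mul (by positivity) (by positivity)]
  congr 2
  field_simp

lemma mutInfo_prodMk_eq_add_condMutInfo [IsFiniteMeasure μ] [Fintype α]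
    [Fintype β] [MeasurableSpace β] [MeasurableSingletonClass β] [Fintype γ]
    (hY : Measurable Y) :
    mutInfo μ X (fun ω => (Y ω, Z ω)) = mutInfo μ X Z + condMutInfo μ X Y Z := by
  have hXZ (x : α) (z : γ) : ∑ y, pr μ {ω | X ω = x ∧ Y ω = y ∧ Z ω = z} =
      pr μ {ω | X ω = x ∧ Z ω = z} := by
    simp only [← sum_pr_eq_and hY fun ω => X ω = x ∧ Z ω = z, and_left_comm]
  calc mutInfo μ X (fun ω => (Y ω, Z ω))
      = ∑ x, ∑ y, ∑ z, pr μ {ω | X ω = x ∧ Y ω = y ∧ Z ω = z} *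
          Real.log (pr μ {ω | X ω = x ∧ Y ω = y ∧ Z ω = z} /
            (pr μ {ω | X ω = x} * pr μ {ω | Y ω = y ∧ Z ω = z})) := by
        simp only [mutInfo, Fintype.sum_prod_type, Prod.mk.injEq]
    _ = ∑ z, ∑ x, ∑ y, pr μ {ω | X ω = x ∧ Y ω = y ∧ Z ω = z} *
          Real.log (pr μ {ω | X ω = x ∧ Y ω = y ∧ Z ω = z} /
            (pr μ {ω | X ω = x} * pr μ {ω | Y ω = y ∧ Z ω = z})) := by
        rw [Finset.sum_comm_cycle]
    _ = mutInfo μ X Z + condMutInfo μ X Y Z := by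
        simp only [pr_mul_log_div_eq_add, Finset.sum_add_distrib, ← Finset.sum_mul, hXZ]
        rw [mutInfo, condMutInfo, Finset.sum_comm]

lemma CondIndepRV.mutInfo_le [IsFiniteMeasure μ]
    [Fintype α] [MeasurableSpace α] [MeasurableSingletonClass α]
    [Fintype β] [MeasurableSpace β] [MeasurableSingletonClass β]
    [Fintype γ] [MeasurableSpace γ] [MeasurableSingletonClass γ]
    (hX : Measurable X) (hY : Measurable Y) (hZ : Measurable Z) (h : CondIndepRV μ X Y Z) :
    mutInfo μ X Y ≤ mutInfo μ X Z := by
  calc mutInfo μ X Y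
      ≤ mutInfo μ X Y + condMutInfo μ X Z Y := le_add_of_nonneg_right (condMutInfo_nonneg hX hZ)
    _ = mutInfo μ X (fun ω => (Y ω, Z ω)) := by
        rw [← mutInfo_prodMk_eq_add_condMutInfo hZ, mutInfo_prodMk_comm]
    _ = mutInfo μ X Z := by
        rw [mutInfo_prodMk_eq_add_condMutInfo hY, h.condMutInfo_eq_zero, add_zero]

lemma IndepRV.mutInfo_prodMk_le [IsProbabilityMeasure μ]
    [Fintype α] [MeasurableSpace α] [MeasurableSingletonClass α]
    [Fintype β] [MeasurableSpace β] [MeasurableSingletonClass β]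
    [Fintype γ] [MeasurableSpace γ] [MeasurableSingletonClass γ]
    (hX : Measurable X) (hY : Measurable Y) (hZ : Measurable Z) (h : IndepRV μ Z X) :
    mutInfo μ X (fun ω => (Y ω, Z ω)) ≤ mutInfo μ Y (fun ω => (X ω, Z ω)) := by
  calc mutInfo μ X (fun ω => (Y ω, Z ω))
      = condMutInfo μ X Y Z := by
        rw [mutInfo_prodMk_eq_add_condMutInfo hY, mutInfo_comm, h.mutInfo_eq_zero, zero_add]
    _ ≤ mutInfo μ Y Z + condMutInfo μ Y X Z := by
        rw [condMutInfo_comm]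
        exact le_add_of_nonneg_left (mutInfo_nonneg hY hZ)
    _ = mutInfo μ Y (fun ω => (X ω, Z ω)) := (mutInfo_prodMk_eq_add_condMutInfo hX).symm

end MutualInformation

theorem stmt0_general {Ω 𝒮 𝒰 𝒳 𝒴 𝒮h : Type*} [MeasurableSpace Ω]
    [Fintype 𝒮] [MeasurableSpace 𝒮] [MeasurableSingletonClass 𝒮]
    [Finite 𝒰] [MeasurableSpace 𝒰] [MeasurableSingletonClass 𝒰]
    [Fintype 𝒳] [MeasurableSpace 𝒳] [MeasurableSingletonClass 𝒳]
    [Fintype 𝒴] [MeasurableSpace 𝒴] [MeasurableSingletonClass 𝒴]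
    [Fintype 𝒮h] [MeasurableSpace 𝒮h] [MeasurableSingletonClass 𝒮h]
    (μ : Measure Ω) [IsProbabilityMeasure μ]
    (S : Ω → 𝒮) (U : Ω → 𝒰) (X : Ω → 𝒳) (Y : Ω → 𝒴) (Sh : Ω → 𝒮h)
    (hS : Measurable S) (hU : Measurable U) (hX : Measurable X)
    (hY : Measurable Y) (hSh : Measurable Sh)
    (hUindep : IndepRV μ U S)
    (hYcond : CondIndepRV μ Y (fun ω => (S ω, U ω)) X)
    (hShcond : CondIndepRV μ Sh S (fun ω => (Y ω, U ω))) :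
    mutInfo μ S Sh ≤ mutInfo μ X Y := by
  cases nonempty_fintype 𝒰
  calc mutInfo μ S Sh
      ≤ mutInfo μ S (fun ω => (Y ω, U ω)) := hShcond.symm.mutInfo_le hS hSh (hY.prodMk hU)
    _ ≤ mutInfo μ Y (fun ω => (S ω, U ω)) := hUindep.mutInfo_prodMk_le hS hY hU
    _ ≤ mutInfo μ Y X := hYcond.mutInfo_le hY (hS.prodMk hU) hX
    _ = mutInfo μ X Y := mutInfo_comm

/-- If the joint distribution of `(S, U, X, Y, Ŝ)` factorizes as
`P_S P_U P_{X|S,U} P_{Y|X} P_{Ŝ|Y,U}`, then `I(S;Ŝ) ≤ I(X;Y)`. -/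
theorem stmt0 {Ω 𝒮 𝒰 𝒳 𝒴 𝒮h : Type*} [MeasurableSpace Ω]
    [Fintype 𝒮] [MeasurableSpace 𝒮] [MeasurableSingletonClass 𝒮]
    [Fintype 𝒰] [MeasurableSpace 𝒰] [MeasurableSingletonClass 𝒰]
    [Fintype 𝒳] [MeasurableSpace 𝒳] [MeasurableSingletonClass 𝒳]
    [Fintype 𝒴] [MeasurableSpace 𝒴] [MeasurableSingletonClass 𝒴]
    [Fintype 𝒮h] [MeasurableSpace 𝒮h] [MeasurableSingletonClass 𝒮h]
    (μ : Measure Ω) [IsProbabilityMeasure μ]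
    (S : Ω → 𝒮) (U : Ω → 𝒰) (X : Ω → 𝒳) (Y : Ω → 𝒴) (Sh : Ω → 𝒮h)
    (hS : Measurable S) (hU : Measurable U) (hX : Measurable X)
    (hY : Measurable Y) (hSh : Measurable Sh)
    (hUindep : IndepRV μ U S)
    (hYcond : CondIndepRV μ Y (fun ω => (S ω, U ω)) X)
    (hShcond : CondIndepRV μ Sh (fun ω => (S ω, X ω)) (fun ω => (Y ω, U ω))) :
    mutInfo μ S Sh ≤ mutInfo μ X Y :=
  stmt0_general μ S U X Y Sh hS hU hX hY hSh hUindep hYcond (hShcond.of_prodMk_right hX)
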